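/- arXiv:2012.11177 — 2 statements merged into one kernel-verified Lean document; each statement's English description precedes it below -/
import Mathlib

section
/- Let G ≠ K_n be a graph on n vertices with maximum degree Δ, and let 1/(Δ+1) ≤ α < 1. Then for every integer k with 2 ≤ k ≤ n, S_k(A_α(G)) ≤ (αΔn/2)·(1 + √k). -/
open Matrix Finset Real

/-- The `A_α`-matrix of a graph: `A_α(G) = α·D(G) + (1−α)·A(G)`. -/
noncomputable def Aalpha {n : ℕ} (α : ℝ) (G : SimpleGraph (Fin n)) [DecidableRel G.Adj] :
    Matrix (Fin n) (Fin n) ℝ :=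
  α • Matrix.diagonal (fun i => (G.degree i : ℝ)) + (1 - α) • G.adjMatrix ℝ

/-- The sum of the `k` largest eigenvalues of a real symmetric matrix, expressed as
the supremum over all `k`-subsets of indices of the corresponding eigenvalue sums. -/
noncomputable def Sk {n : ℕ} (M : Matrix (Fin n) (Fin n) ℝ) (k : ℕ) : ℝ :=
  if h : M.IsHermitian then
    sSup {x : ℝ | ∃ s : Finset (Fin n), s.card = k ∧ x = ∑ i ∈ s, h.eigenvalues i}
  else 0


/-!
Let `v₁, …, v_k` be orthonormal eigenvectors for `k` eigenvalues of an `n × n` Hermitian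
matrix `M`, so that these eigenvalues sum to `∑ ⟪vᵢ, M vᵢ⟫`. Write `M = x xᴴ + N`. The rank-one
part contributes `∑ |⟪x, vᵢ⟫|² ≤ ‖x‖²` by Bessel's inequality. By Cauchy–Schwarz the remainder
contributes at most `√k (∑ ‖N vᵢ‖²)^{1/2}`, and Bessel applied to each row of `N` bounds this by
`√k ‖N‖_F`. If the entries of `M` lie in `[0, c]`, choose `x xᴴ` to be the constant matrix `c / 2`:
then `‖x‖² = cn/2`, and `‖N‖_F ≤ cn/2` because the entries of `N` lie in `[-c/2, c/2]`. For
`A_α(G)` one can take `c = max (αΔ) (1 - α)`, which is `αΔ` as soon as `α ≥ 1/(Δ + 1)`.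
-/

section Frobenius

open scoped Matrix.Norms.Frobenius InnerProductSpace

section NormedEntries

variable {ι κ α : Type*} [Fintype ι] [Fintype κ] [SeminormedAddCommGroup α]

theorem frobenius_norm_sq_eq_sum (M : Matrix ι κ α) : ‖M‖ ^ 2 = ∑ i, ∑ j, ‖M i j‖ ^ 2 := by
  change ‖WithLp.toLp 2 fun i => WithLp.toLp 2 (M i)‖ ^ 2 = _
  simp only [PiLp.norm_sq_eq_of_L2]

theorem frobenius_norm_le_sqrt_card_mul {M : Matrix ι κ α} {r : ℝ} (h : ∀ i j, ‖M i j‖ ≤ r) :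
    ‖M‖ ≤ √(Fintype.card ι * Fintype.card κ) * r := by
  obtain hι | ⟨⟨i⟩⟩ := isEmpty_or_nonempty ι
  · simp [Subsingleton.elim M 0]
  obtain hκ | ⟨⟨j⟩⟩ := isEmpty_or_nonempty κ
  · simp [Subsingleton.elim M 0]
  have hr : 0 ≤ r := (norm_nonneg _).trans (h i j)
  refine le_of_sq_le_sq ?_ (by positivity)
  calc ‖M‖ ^ 2 = ∑ i, ∑ j, ‖M i j‖ ^ 2 := frobenius_norm_sq_eq_sum M
    _ ≤ ∑ _i : ι, ∑ _j : κ, r ^ 2 := by gcongr with i _ j _; exact h i j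
    _ = (√(Fintype.card ι * Fintype.card κ) * r) ^ 2 := by
      rw [mul_pow, Real.sq_sqrt (by positivity)]
      simp [mul_assoc]

end NormedEntries

variable {𝕜 ι κ τ : Type*} [RCLike 𝕜] [Fintype κ] [DecidableEq κ]

theorem toEuclideanLin_apply_eq_inner (M : Matrix ι κ 𝕜) (x : EuclideanSpace 𝕜 κ) (i : ι) :
    toEuclideanLin M x i = ⟪WithLp.toLp 2 (star (M i)), x⟫_𝕜 := by
  simp [toLpLin_apply, mulVec, dotProduct, PiLp.inner_apply, mul_comm]

theorem sum_norm_toEuclideanLin_sq_le [Fintype ι] (M : Matrix ι κ 𝕜)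
    {v : τ → EuclideanSpace 𝕜 κ} (hv : Orthonormal 𝕜 v) (s : Finset τ) :
    ∑ t ∈ s, ‖toEuclideanLin M (v t)‖ ^ 2 ≤ ‖M‖ ^ 2 := by
  calc ∑ t ∈ s, ‖toEuclideanLin M (v t)‖ ^ 2
      = ∑ i, ∑ t ∈ s, ‖⟪v t, WithLp.toLp 2 (star (M i))⟫_𝕜‖ ^ 2 := by
        rw [Finset.sum_comm]
        simp only [PiLp.norm_sq_eq_of_L2, toEuclideanLin_apply_eq_inner, norm_inner_symm]
    _ ≤ ∑ i, ‖WithLp.toLp 2 (star (M i))‖ ^ 2 := by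
        gcongr with i
        exact hv.sum_inner_products_le _
    _ = ‖M‖ ^ 2 := by
        simp only [frobenius_norm_sq_eq_sum, PiLp.norm_sq_eq_of_L2, Pi.star_apply, norm_star]

theorem norm_sum_inner_toEuclideanLin_le (M : Matrix κ κ 𝕜) {v : τ → EuclideanSpace 𝕜 κ}
    (hv : Orthonormal 𝕜 v) (s : Finset τ) :
    ‖∑ t ∈ s, ⟪v t, toEuclideanLin M (v t)⟫_𝕜‖ ≤ √(#s) * ‖M‖ := by
  have sq_sum_le : (∑ t ∈ s, ‖toEuclideanLin M (v t)‖) ^ 2 ≤ (√(#s) * ‖M‖) ^ 2 :=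
    calc (∑ t ∈ s, ‖toEuclideanLin M (v t)‖) ^ 2
        ≤ #s * ∑ t ∈ s, ‖toEuclideanLin M (v t)‖ ^ 2 := sq_sum_le_card_mul_sum_sq
      _ ≤ #s * ‖M‖ ^ 2 := by gcongr; exact sum_norm_toEuclideanLin_sq_le M hv s
      _ = (√(#s) * ‖M‖) ^ 2 := by rw [mul_pow, Real.sq_sqrt (by positivity)]
  calc ‖∑ t ∈ s, ⟪v t, toEuclideanLin M (v t)⟫_𝕜‖
      ≤ ∑ t ∈ s, ‖⟪v t, toEuclideanLin M (v t)⟫_𝕜‖ := norm_sum_le _ _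
    _ ≤ ∑ t ∈ s, ‖toEuclideanLin M (v t)‖ := by
        gcongr with t
        simpa [hv.1 t] using norm_inner_le_norm (𝕜 := 𝕜) (v t) (toEuclideanLin M (v t))
    _ ≤ √(#s) * ‖M‖ := le_of_sq_le_sq sq_sum_le (by positivity)

theorem inner_toEuclideanLin_vecMulVec_star (x v : EuclideanSpace 𝕜 κ) :
    ⟪v, toEuclideanLin (vecMulVec x (star x)) v⟫_𝕜 = (‖⟪v, x⟫_𝕜‖ ^ 2 : ℝ) := by
  rw [← InnerProductSpace.symm_toEuclideanLin_rankOne, LinearEquiv.apply_symm_apply,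
    ContinuousLinearMap.coe_coe, InnerProductSpace.inner_right_rankOne_apply,
    ← inner_conj_symm x v, RCLike.mul_conj, RCLike.ofReal_pow]

section Hermitian

variable {M : Matrix κ κ 𝕜} (hM : M.IsHermitian)

theorem inner_eigenvectorBasis_toEuclideanLin (i : κ) :
    ⟪hM.eigenvectorBasis i, toEuclideanLin M (hM.eigenvectorBasis i)⟫_𝕜 = hM.eigenvalues i := by
  rw [toLpLin_apply, hM.mulVec_eigenvectorBasis, RCLike.real_smul_eq_coe_smul (K := 𝕜),
    WithLp.toLp_smul, inner_smul_right, WithLp.toLp_ofLp,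
    inner_self_eq_one_of_norm_eq_one (hM.eigenvectorBasis.norm_eq_one i), mul_one]

theorem sum_eigenvalues_le_norm_sq_add (x : EuclideanSpace 𝕜 κ) (s : Finset κ) :
    ∑ i ∈ s, hM.eigenvalues i ≤ ‖x‖ ^ 2 + √(#s) * ‖M - vecMulVec x (star x)‖ := by
  set v := hM.eigenvectorBasis
  set N := M - vecMulVec x (star x) with hN
  have eigenvalue_eq (i : κ) :
      hM.eigenvalues i = ‖⟪v i, x⟫_𝕜‖ ^ 2 + RCLike.re ⟪v i, toEuclideanLin N (v i)⟫_𝕜 := by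
    rw [hN, map_sub, LinearMap.sub_apply, inner_sub_right, inner_eigenvectorBasis_toEuclideanLin,
      inner_toEuclideanLin_vecMulVec_star, map_sub, RCLike.ofReal_re, RCLike.ofReal_re]
    ring
  calc ∑ i ∈ s, hM.eigenvalues i
      = ∑ i ∈ s, ‖⟪v i, x⟫_𝕜‖ ^ 2 + RCLike.re (∑ i ∈ s, ⟪v i, toEuclideanLin N (v i)⟫_𝕜) := by
        simp only [eigenvalue_eq, Finset.sum_add_distrib, map_sum]
    _ ≤ ‖x‖ ^ 2 + √(#s) * ‖N‖ := by
        gcongr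
        · exact v.orthonormal.sum_inner_products_le x
        · exact (RCLike.re_le_norm _).trans (norm_sum_inner_toEuclideanLin_le N v.orthonormal s)

theorem sum_eigenvalues_le_of_norm_sub_le {m r : ℝ} (hm : 0 ≤ m)
    (h : ∀ i j, ‖M i j - (m : 𝕜)‖ ≤ r) (s : Finset κ) :
    ∑ i ∈ s, hM.eigenvalues i ≤ Fintype.card κ * (m + √(#s) * r) := by
  set x : EuclideanSpace 𝕜 κ := WithLp.toLp 2 fun _ => ((√m : ℝ) : 𝕜) with hx
  have norm_sq_x : ‖x‖ ^ 2 = Fintype.card κ * m := by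
    simp [hx, PiLp.norm_sq_eq_of_L2, Real.sq_sqrt hm]
  have xx_apply (i j : κ) : vecMulVec x (star x) i j = (m : 𝕜) := by
    simp [hx, vecMulVec_apply, ← RCLike.ofReal_mul, Real.mul_self_sqrt hm]
  have norm_rest : ‖M - vecMulVec x (star x)‖ ≤ Fintype.card κ * r := by
    rw [← Real.sqrt_mul_self (Nat.cast_nonneg (Fintype.card κ))]
    refine frobenius_norm_le_sqrt_card_mul fun i j => ?_
    rw [Matrix.sub_apply, xx_apply]
    exact h i j
  calc ∑ i ∈ s, hM.eigenvalues i
      ≤ ‖x‖ ^ 2 + √(#s) * ‖M - vecMulVec x (star x)‖ := sum_eigenvalues_le_norm_sq_add hM x s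
    _ ≤ Fintype.card κ * m + √(#s) * (Fintype.card κ * r) := by rw [norm_sq_x]; gcongr
    _ = Fintype.card κ * (m + √(#s) * r) := by ring

end Hermitian

end Frobenius

theorem sum_eigenvalues_le_of_mem_Icc {ι : Type*} [Fintype ι] [DecidableEq ι]
    {M : Matrix ι ι ℝ} (hM : M.IsHermitian) {c : ℝ} (hc : 0 ≤ c)
    (h : ∀ i j, M i j ∈ Set.Icc 0 c) (s : Finset ι) :
    ∑ i ∈ s, hM.eigenvalues i ≤ c * Fintype.card ι / 2 * (1 + √(#s)) := by
  have dist_midpoint_le (i j : ι) : ‖M i j - c / 2‖ ≤ c / 2 := by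
    rw [Real.norm_eq_abs, abs_le]
    constructor <;> linarith [(h i j).1, (h i j).2]
  calc ∑ i ∈ s, hM.eigenvalues i
      ≤ Fintype.card ι * (c / 2 + √(#s) * (c / 2)) :=
        sum_eigenvalues_le_of_norm_sub_le hM (by positivity : 0 ≤ c / 2)
          (mod_cast dist_midpoint_le) s
    _ = c * Fintype.card ι / 2 * (1 + √(#s)) := by ring

theorem Sk_le {n k : ℕ} {M : Matrix (Fin n) (Fin n) ℝ} (hM : M.IsHermitian) (hkn : k ≤ n)
    {b : ℝ} (h : ∀ s : Finset (Fin n), #s = k → ∑ i ∈ s, hM.eigenvalues i ≤ b) :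
    Sk M k ≤ b := by
  rw [Sk, dif_pos hM]
  obtain ⟨s, -, hs⟩ := Finset.exists_subset_card_eq (s := (univ : Finset (Fin n))) (by simpa)
  refine csSup_le ⟨_, s, hs, rfl⟩ ?_
  rintro _ ⟨t, ht, rfl⟩
  exact h t ht

theorem one_sub_le_mul_of_one_div_add_one_le {a d : ℝ} (hd : 0 ≤ d) (h : 1 / (d + 1) ≤ a) :
    1 - a ≤ a * d := by
  rw [div_le_iff₀ (by positivity)] at h
  linarith

section Aalpha

variable {n : ℕ} {α : ℝ} (G : SimpleGraph (Fin n)) [DecidableRel G.Adj]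

theorem Aalpha_isHermitian : (Aalpha α G).IsHermitian :=
  ((isHermitian_diagonal _).smul (.all α)).add
    ((G.isHermitian_adjMatrix ℝ).smul (.all (1 - α)))

theorem Aalpha_apply_self (i : Fin n) : Aalpha α G i i = α * G.degree i := by
  simp [Aalpha]

theorem Aalpha_apply_of_ne {i j : Fin n} (hij : i ≠ j) :
    Aalpha α G i j = if G.Adj i j then 1 - α else 0 := by
  simp [Aalpha, hij, SimpleGraph.adjMatrix_apply]

theorem Aalpha_apply_mem_Icc (hα0 : 0 ≤ α) (hα1 : α ≤ 1) (i j : Fin n) :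
    Aalpha α G i j ∈ Set.Icc 0 (max (α * G.maxDegree) (1 - α)) := by
  obtain rfl | hij := eq_or_ne i j
  · rw [Aalpha_apply_self]
    refine ⟨by positivity, le_max_of_le_left ?_⟩
    gcongr
    exact G.degree_le_maxDegree i
  · rw [Aalpha_apply_of_ne G hij]
    have : 0 ≤ 1 - α := sub_nonneg.2 hα1
    split_ifs
    · exact ⟨this, le_max_right _ _⟩
    · exact ⟨le_rfl, le_max_of_le_right this⟩

theorem stmt2_general (hα0 : 0 ≤ α) (hα1 : α ≤ 1) {k : ℕ} (hkn : k ≤ n) :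
    Sk (Aalpha α G) k ≤ max (α * G.maxDegree) (1 - α) * n / 2 * (1 + √k) := by
  refine Sk_le (Aalpha_isHermitian G) hkn fun s hs => ?_
  simpa [hs] using sum_eigenvalues_le_of_mem_Icc (Aalpha_isHermitian G)
    (le_max_of_le_left (by positivity)) (Aalpha_apply_mem_Icc G hα0 hα1) s

end Aalpha

theorem stmt2 {n : ℕ} (G : SimpleGraph (Fin n)) [DecidableRel G.Adj] (hG : G ≠ ⊤)
    (α : ℝ) (hα0 : 1 / ((G.maxDegree : ℝ) + 1) ≤ α) (hα1 : α < 1)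
    (k : ℕ) (hk2 : 2 ≤ k) (hkn : k ≤ n) :
    Sk (Aalpha α G) k ≤ α * G.maxDegree * n / 2 * (1 + Real.sqrt k) := by
  rw [← max_eq_left (one_sub_le_mul_of_one_div_add_one_le (Nat.cast_nonneg _) hα0)]
  exact stmt2_general G ((by positivity : (0 : ℝ) ≤ _).trans hα0) hα1.le hkn
end

section
/- Let T be a tree on n vertices with matching number β. Then the sum S_k(A(T)) of the k largest adjacency eigenvalues satisfies: S_k(A(T)) ≤ √(k(n−1)) if 1 ≤ k ≤ β; S_k(A(T)) ≤ √(β(n−1)) if β < k ≤ n−β; and S_k(A(T)) ≤ √((n−k)(n−1)) if n−β < k ≤ n. -/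
open Matrix Finset Real

/-- The matching number of a graph: the largest number of pairwise disjoint edges. -/
noncomputable def matchingNumber {n : ℕ} (G : SimpleGraph (Fin n)) : ℕ :=
  sSup {k | ∃ M : G.Subgraph, M.IsMatching ∧ M.edgeSet.ncard = k}

/-!
The spectrum of a bipartite graph with `m` edges is symmetric about `0`. Hence exactly half of the
sum `2 * m` of the squared eigenvalues comes from the positive ones, and there are `rank A / 2`
positive eigenvalues. Since linearly independent rows have a transversal of nonzero entries, the
rank of the off-diagonal block of `A` is at most the matching number `β`, so at most `β`
eigenvalues are positive. Cauchy–Schwarz on the positive eigenvalues of a `k`-subset gives the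
bounds `√(k * m)` and `√(β * m)`. As the trace vanishes, the sum over a `k`-subset is the sum of
the negated eigenvalues over its complement, which gives `√((n - k) * m)`; a tree has `m = n - 1`.
-/

lemma rank_add_le_rank_add_rank {m n K : Type*} [Fintype n] [Field K]
    (A B : Matrix m n K) : (A + B).rank ≤ A.rank + B.rank := by
  rw [Matrix.rank, Matrix.mulVecLin_add]
  exact (Submodule.finrank_mono (LinearMap.range_add_le _ _)).trans
    (Submodule.finrank_add_le_finrank_add_finrank _ _)

section Transversal

variable {ι m n K : Type*} [Field K]

/- The Hall condition holds because the rows indexed by a finset `s` vanish outside the union of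
their supports, so their rank `#s` is at most the size of that union. -/
lemma exists_injective_forall_apply_ne_zero_of_linearIndependent [Finite n] {v : ι → n → K}
    (hv : LinearIndependent K v) :
    ∃ g : ι → n, Function.Injective g ∧ ∀ i, v i (g i) ≠ 0 := by
  classical
  have := Fintype.ofFinite n
  let support (i : ι) : Finset n := {j | v i j ≠ 0}
  have hall (s : Finset ι) : #s ≤ #(s.biUnion support) := by
    let N : Matrix s n K := Matrix.of fun i => v i
    have hN : LinearIndependent K N.row := hv.comp _ Subtype.val_injective
    calc #s = N.rank := by rw [hN.rank_matrix, Fintype.card_coe]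
      _ = Nᵀ.rank := N.rank_transpose.symm
      _ ≤ #(s.biUnion support) := by
        refine Nᵀ.rank_le_card_of_support_subset _ fun j hj => ?_
        obtain ⟨i, hi⟩ := Function.ne_iff.mp hj
        exact mem_biUnion.mpr ⟨i, i.2, mem_filter.mpr ⟨mem_univ j, hi⟩⟩
  obtain ⟨g, hg, hmem⟩ := (all_card_le_biUnion_card_iff_exists_injective support).mp hall
  exact ⟨g, hg, fun i => (mem_filter.mp (hmem i)).2⟩

variable [Fintype n] [Finite m]

lemma exists_linearIndependent_row_submatrix (M : Matrix m n K) :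
    ∃ f : Fin M.rank → m, Function.Injective f ∧ LinearIndependent K (M.submatrix f id).row := by
  obtain ⟨κ, f, hf, hspan, hli⟩ := exists_linearIndependent' K M.row
  have : Finite κ := Finite.of_injective f hf
  have := Fintype.ofFinite κ
  have hcard : Fintype.card κ = M.rank := by
    rw [M.rank_eq_finrank_span_row, ← hspan, finrank_span_eq_card hli]
  let e : Fin M.rank ≃ κ := (Fintype.equivFinOfCardEq hcard).symm
  exact ⟨f ∘ e, hf.comp e.injective, hli.comp e e.injective⟩

lemma exists_injective_forall_apply_ne_zero (M : Matrix m n K) :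
    ∃ (f : Fin M.rank → m) (g : Fin M.rank → n),
      Function.Injective f ∧ Function.Injective g ∧ ∀ i, M (f i) (g i) ≠ 0 := by
  obtain ⟨f, hf, hli⟩ := exists_linearIndependent_row_submatrix M
  obtain ⟨g, hg, hne⟩ := exists_injective_forall_apply_ne_zero_of_linearIndependent hli
  exact ⟨f, g, hf, hg, hne⟩

end Transversal

section Matching

variable {V : Type*} {G : SimpleGraph V}

lemma exists_isMatching_ncard_edgeSet_eq_card {ι : Type*} {f g : ι → V}
    (hf : Function.Injective f) (hg : Function.Injective g) (hfg : ∀ i j, f i ≠ g j)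
    (hadj : ∀ i, G.Adj (f i) (g i)) :
    ∃ M : G.Subgraph, M.IsMatching ∧ M.edgeSet.ncard = Nat.card ι := by
  refine ⟨⨆ i, G.subgraphOfAdj (hadj i), ?_, ?_⟩
  · refine .iSup (fun i => .subgraphOfAdj (hadj i)) fun i j hij => ?_
    simp [SimpleGraph.support_subgraphOfAdj, hf.ne hij.symm, hg.ne hij.symm, hfg, (hfg _ _).symm]
  · have hedge : Function.Injective fun i => s(f i, g i) := fun i j hij => by
      rcases Sym2.eq_iff.mp hij with ⟨h, -⟩ | ⟨h, -⟩
      · exact hf h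
      · exact absurd h (hfg i j)
    simp only [SimpleGraph.Subgraph.edgeSet_iSup, SimpleGraph.edgeSet_subgraphOfAdj,
      Set.iUnion_singleton_eq_range]
    rw [← Set.image_univ, Set.ncard_image_of_injective _ hedge, Set.ncard_univ]

variable [Fintype V] [DecidableRel G.Adj] {s t : Set V}

lemma exists_isMatching_rank_adjMatrix_le (K : Type*) [Field K] (hG : G.IsBipartiteWith s t) :
    ∃ M : G.Subgraph, M.IsMatching ∧ (G.adjMatrix K).rank ≤ 2 * M.edgeSet.ncard := by
  classical
  let B : Matrix V V K := Matrix.of fun i j => if i ∈ s then G.adjMatrix K i j else 0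
  have hB {i j : V} (hij : B i j ≠ 0) : i ∈ s ∧ j ∈ t ∧ G.Adj i j := by
    simp only [B, Matrix.of_apply, SimpleGraph.adjMatrix_apply, ne_eq, ite_eq_right_iff,
      one_ne_zero, imp_false, not_forall, not_not] at hij
    exact ⟨hij.1, hG.mem_of_mem_adj hij.1 hij.2, hij.2⟩
  have hsum : G.adjMatrix K = B + Bᵀ := by
    ext i j
    by_cases hij : G.Adj i j
    · rcases hG.mem_of_adj hij with ⟨hi, hj⟩ | ⟨hi, hj⟩
      · have hjs : j ∉ s := hG.disjoint.notMem_of_mem_right hj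
        simp [B, hij, hi, hjs]
      · have his : i ∉ s := hG.disjoint.notMem_of_mem_right hi
        simp [B, hij.symm, hij, his, hj]
    · simp [B, hij, G.adj_comm j i]
  obtain ⟨f, g, hf, hg, hne⟩ := exists_injective_forall_apply_ne_zero B
  obtain ⟨M, hM, hcard⟩ := exists_isMatching_ncard_edgeSet_eq_card hf hg
    (fun i j => hG.disjoint.ne_of_mem (hB (hne i)).1 (hB (hne j)).2.1)
    fun i => (hB (hne i)).2.2
  refine ⟨M, hM, ?_⟩
  calc (G.adjMatrix K).rank ≤ B.rank + Bᵀ.rank := hsum ▸ rank_add_le_rank_add_rank B Bᵀ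
    _ = 2 * M.edgeSet.ncard := by rw [B.rank_transpose, hcard, Nat.card_fin, two_mul]

lemma ncard_edgeSet_le_matchingNumber {n : ℕ} {G : SimpleGraph (Fin n)} {M : G.Subgraph}
    (hM : M.IsMatching) : M.edgeSet.ncard ≤ matchingNumber G := by
  refine le_csSup ⟨Nat.card (Sym2 (Fin n)), ?_⟩ ⟨M, hM, rfl⟩
  rintro _ ⟨M', -, rfl⟩
  exact Set.ncard_le_card _

lemma rank_adjMatrix_le_two_mul_matchingNumber {n : ℕ} {G : SimpleGraph (Fin n)}
    [DecidableRel G.Adj] (K : Type*) [Field K] (hG : G.IsBipartite) :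
    (G.adjMatrix K).rank ≤ 2 * matchingNumber G := by
  obtain ⟨s, t, hst⟩ := hG.exists_isBipartiteWith
  obtain ⟨M, hM, hrank⟩ := exists_isMatching_rank_adjMatrix_le K hst
  exact hrank.trans (Nat.mul_le_mul_left 2 (ncard_edgeSet_le_matchingNumber hM))

end Matching

section AdjMatrix

variable {V : Type*} [Fintype V] {G : SimpleGraph V} [DecidableRel G.Adj]

/- Flipping the sign of the coordinates in one part conjugates the adjacency matrix to its
negative. -/
lemma charpoly_neg_adjMatrix [DecidableEq V] (R : Type*) [CommRing R] (hG : G.IsBipartite) :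
    (-G.adjMatrix R).charpoly = (G.adjMatrix R).charpoly := by
  classical
  obtain ⟨s, t, hst⟩ := hG.exists_isBipartiteWith
  let D : Matrix V V R := Matrix.diagonal fun i => if i ∈ s then 1 else -1
  have hDD : D * D = 1 := by
    simp only [D, Matrix.diagonal_mul_diagonal, ← Matrix.diagonal_one]
    congr! with i
    split_ifs <;> simp
  have hDA : D * G.adjMatrix R * D = -G.adjMatrix R := by
    ext i j
    simp only [D, Matrix.mul_diagonal, Matrix.diagonal_mul, Matrix.neg_apply,
      SimpleGraph.adjMatrix_apply]
    by_cases hij : G.Adj i j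
    · rcases hst.mem_of_adj hij with ⟨hi, hj⟩ | ⟨hi, hj⟩
      · simp [hij, hi, hst.disjoint.notMem_of_mem_right hj]
      · simp [hij, hj, hst.disjoint.notMem_of_mem_right hi]
    · simp [hij]
  rw [← hDA, Matrix.charpoly_mul_comm, ← mul_assoc, hDD, one_mul]

lemma trace_adjMatrix_mul_self (R : Type*) [NonAssocSemiring R] :
    (G.adjMatrix R * G.adjMatrix R).trace = 2 * #G.edgeFinset := by
  simp only [Matrix.trace, Matrix.diag_apply, SimpleGraph.adjMatrix_mul_self_apply_self]
  exact_mod_cast congrArg (Nat.cast (R := R)) G.sum_degrees_eq_twice_card_edges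

end AdjMatrix

section Spectrum

variable {n 𝕜 : Type*} [Fintype n] [DecidableEq n] [RCLike 𝕜] {A : Matrix n n 𝕜}

lemma roots_charpoly_neg (hA : A.IsHermitian) :
    (-A).charpoly.roots = univ.val.map fun i => ((-hA.eigenvalues i : ℝ) : 𝕜) := by
  have hdiag : -A = Unitary.conjStarAlgAut 𝕜 _ hA.eigenvectorUnitary
      (Matrix.diagonal fun i => ((-hA.eigenvalues i : ℝ) : 𝕜)) := by
    conv_lhs => rw [hA.spectral_theorem, ← map_neg, Matrix.diagonal_neg]
    simp
  have hcharpoly : (-A).charpoly =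
      ∏ i, (Polynomial.X - Polynomial.C ((-hA.eigenvalues i : ℝ) : 𝕜)) := by
    rw [hdiag, Unitary.conjStarAlgAut_apply, Matrix.charpoly_mul_comm, ← mul_assoc]
    simp [Matrix.charpoly_diagonal]
  rw [hcharpoly, Polynomial.roots_prod _ _ (prod_ne_zero_iff.mpr fun _ _ =>
    Polynomial.X_sub_C_ne_zero _)]
  simp only [Polynomial.roots_X_sub_C, Multiset.bind_singleton]

lemma sum_comp_neg_eigenvalues {M : Type*} [AddCommMonoid M] (hA : A.IsHermitian)
    (hneg : (-A).charpoly = A.charpoly) (F : ℝ → M) :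
    ∑ i, F (-hA.eigenvalues i) = ∑ i, F (hA.eigenvalues i) := by
  have hroots := (roots_charpoly_neg hA).symm.trans
    (hneg ▸ hA.roots_charpoly_eq_eigenvalues)
  simpa [Function.comp_def] using congrArg (fun r => (r.map (F ∘ RCLike.re)).sum) hroots

lemma rank_eq_two_mul_card_eigenvalues_pos (hA : A.IsHermitian)
    (hneg : (-A).charpoly = A.charpoly) : A.rank = 2 * #{i | 0 < hA.eigenvalues i} := by
  have hsymm : #{i | hA.eigenvalues i < 0} = #{i | 0 < hA.eigenvalues i} := by
    simpa only [card_filter, Left.neg_pos_iff] using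
      sum_comp_neg_eigenvalues hA hneg fun x => if 0 < x then 1 else 0
  have hdisj : Disjoint ({i | hA.eigenvalues i < 0} : Finset n)
      ({i | 0 < hA.eigenvalues i} : Finset n) :=
    disjoint_filter.mpr fun _ _ h => h.asymm
  rw [hA.rank_eq_card_non_zero_eigs, Fintype.card_subtype]
  simp only [ne_iff_lt_or_gt]
  rw [filter_or, card_union_of_disjoint hdisj, hsymm, two_mul]

lemma sum_eigenvalues_sq (hA : A.IsHermitian) :
    ∑ i, hA.eigenvalues i ^ 2 = RCLike.re (A * A).trace := by
  have htrace : (A * A).trace = ∑ i, (hA.eigenvalues i : 𝕜) ^ 2 := by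
    conv_lhs => rw [hA.spectral_theorem, ← map_mul, Unitary.conjStarAlgAut_apply,
      Matrix.trace_mul_comm, ← mul_assoc]
    simp [Matrix.trace_diagonal, Matrix.diagonal_mul_diagonal, sq]
  rw [htrace]
  exact_mod_cast (RCLike.ofReal_re (K := 𝕜) (∑ i, hA.eigenvalues i ^ (2 : ℕ))).symm

lemma two_mul_sum_posPart_eigenvalues_sq (hA : A.IsHermitian)
    (hneg : (-A).charpoly = A.charpoly) :
    2 * ∑ i, (hA.eigenvalues i)⁺ ^ 2 = RCLike.re (A * A).trace := by
  have hsq (x : ℝ) : x ^ 2 = x⁺ ^ 2 + (-x)⁺ ^ 2 := by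
    rcases le_total 0 x with h | h <;> simp [h]
  rw [← sum_eigenvalues_sq hA, sum_congr rfl fun i _ => hsq (hA.eigenvalues i), sum_add_distrib,
    sum_comp_neg_eigenvalues hA hneg fun x => x⁺ ^ 2, two_mul]

end Spectrum

lemma sum_le_sqrt_mul_sum_posPart_sq {ι : Type*} [Fintype ι] (f : ι → ℝ) {s : Finset ι} {m : ℕ}
    (hm : #{i ∈ s | 0 < f i} ≤ m) : ∑ i ∈ s, f i ≤ √(m * ∑ i, (f i)⁺ ^ 2) := by
  have hpos : ∑ i ∈ s, f i ≤ ∑ i ∈ s with 0 < f i, (f i)⁺ := by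
    rw [sum_filter]
    refine sum_le_sum fun i _ => ?_
    split_ifs with h
    · exact le_posPart _
    · exact not_lt.mp h
  refine hpos.trans (Real.le_sqrt_of_sq_le ?_)
  calc (∑ i ∈ s with 0 < f i, (f i)⁺) ^ 2
      ≤ #{i ∈ s | 0 < f i} * ∑ i ∈ s with 0 < f i, (f i)⁺ ^ 2 := sq_sum_le_card_mul_sum_sq
    _ ≤ m * ∑ i, (f i)⁺ ^ 2 := by
      gcongr
      exact subset_univ _

section BipartiteSpectrum

variable {V : Type*} [Fintype V] [DecidableEq V] {G : SimpleGraph V} [DecidableRel G.Adj]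

lemma sum_posPart_eigenvalues_adjMatrix_sq (hG : G.IsBipartite) :
    ∑ i, ((G.isHermitian_adjMatrix ℝ).eigenvalues i)⁺ ^ 2 = #G.edgeFinset := by
  have h := two_mul_sum_posPart_eigenvalues_sq (G.isHermitian_adjMatrix ℝ)
    (charpoly_neg_adjMatrix ℝ hG)
  rw [trace_adjMatrix_mul_self, RCLike.re_to_real] at h
  exact mul_left_cancel₀ two_ne_zero h

variable (G) in
lemma sum_eigenvalues_adjMatrix :
    ∑ i, (G.isHermitian_adjMatrix ℝ).eigenvalues i = 0 := by
  simpa using (G.isHermitian_adjMatrix ℝ).trace_eq_sum_eigenvalues.symm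

lemma card_eigenvalues_adjMatrix_pos_le_matchingNumber {n : ℕ} {G : SimpleGraph (Fin n)}
    [DecidableRel G.Adj] (hG : G.IsBipartite) :
    #{i | 0 < (G.isHermitian_adjMatrix ℝ).eigenvalues i} ≤ matchingNumber G := by
  have hrank := rank_adjMatrix_le_two_mul_matchingNumber ℝ hG
  rw [rank_eq_two_mul_card_eigenvalues_pos (G.isHermitian_adjMatrix ℝ)
    (charpoly_neg_adjMatrix ℝ hG)] at hrank
  exact Nat.le_of_mul_le_mul_left hrank two_pos

end BipartiteSpectrum

lemma Sk_le_s6 {n k : ℕ} {A : Matrix (Fin n) (Fin n) ℝ} (hA : A.IsHermitian) (hk : k ≤ n) {b : ℝ}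
    (hb : ∀ s : Finset (Fin n), #s = k → ∑ i ∈ s, hA.eigenvalues i ≤ b) : Sk A k ≤ b := by
  rw [Sk, dif_pos hA]
  obtain ⟨s, -, hs⟩ := exists_subset_card_eq (s := (univ : Finset (Fin n))) (by simpa using hk)
  refine csSup_le ⟨_, s, hs, rfl⟩ ?_
  rintro _ ⟨s, hs, rfl⟩
  exact hb s hs

theorem stmt6_general {n k : ℕ} (G : SimpleGraph (Fin n)) [DecidableRel G.Adj]
    (hG : G.IsBipartite) (hk : k ≤ n) :
    Sk (G.adjMatrix ℝ) k ≤ √(k * #G.edgeFinset) ∧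
    Sk (G.adjMatrix ℝ) k ≤ √(matchingNumber G * #G.edgeFinset) ∧
    Sk (G.adjMatrix ℝ) k ≤ √((n - k : ℕ) * #G.edgeFinset) := by
  have hA := G.isHermitian_adjMatrix ℝ
  set eig := hA.eigenvalues with heig
  have hpos : ∑ i, (eig i)⁺ ^ 2 = #G.edgeFinset := sum_posPart_eigenvalues_adjMatrix_sq hG
  have hneg : ∑ i, (-eig i)⁺ ^ 2 = #G.edgeFinset :=
    (sum_comp_neg_eigenvalues hA (charpoly_neg_adjMatrix ℝ hG) fun x => x⁺ ^ 2).trans hpos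
  refine ⟨Sk_le_s6 hA hk fun s hs => ?_, Sk_le_s6 hA hk fun s _ => ?_, Sk_le_s6 hA hk fun s hs => ?_⟩
  · exact hpos ▸ sum_le_sqrt_mul_sum_posPart_sq eig (hs ▸ card_filter_le _ _)
  · have hcard : #{i ∈ s | 0 < eig i} ≤ matchingNumber G :=
      (card_le_card (filter_subset_filter _ (subset_univ s))).trans
        (card_eigenvalues_adjMatrix_pos_le_matchingNumber hG)
    exact hpos ▸ sum_le_sqrt_mul_sum_posPart_sq eig hcard
  · have hcompl : ∑ i ∈ s, eig i = ∑ i ∈ sᶜ, -eig i := by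
      rw [sum_neg_distrib, eq_neg_iff_add_eq_zero, sum_add_sum_compl, heig,
        sum_eigenvalues_adjMatrix]
    have hcard : #{i ∈ sᶜ | 0 < -eig i} ≤ n - k :=
      (card_filter_le _ _).trans (by rw [card_compl, Fintype.card_fin, hs])
    exact hcompl ▸ hneg ▸ sum_le_sqrt_mul_sum_posPart_sq (fun i => -eig i) hcard

theorem stmt6 {n : ℕ} (T : SimpleGraph (Fin n)) [DecidableRel T.Adj] (hT : T.IsTree)
    (β : ℕ) (hβ : β = matchingNumber T)
    (k : ℕ) (hk1 : 1 ≤ k) (hkn : k ≤ n) :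
    (k ≤ β → Sk (T.adjMatrix ℝ) k ≤ Real.sqrt ((k : ℝ) * ((n : ℝ) - 1))) ∧
    (β < k → k ≤ n - β → Sk (T.adjMatrix ℝ) k ≤ Real.sqrt ((β : ℝ) * ((n : ℝ) - 1))) ∧
    (n - β < k → Sk (T.adjMatrix ℝ) k ≤ Real.sqrt ((((n - k : ℕ)) : ℝ) * ((n : ℝ) - 1))) := by
  subst hβ
  have hcard : (#T.edgeFinset : ℝ) = n - 1 :=
    eq_sub_of_add_eq (by exact_mod_cast hT.card_edgeFinset.trans (Fintype.card_fin n))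
  obtain ⟨hk, hmatch, hcompl⟩ := hcard ▸ stmt6_general T hT.isBipartite hkn
  exact ⟨fun _ => hk, fun _ _ => hmatch, fun _ => hcompl⟩
end
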